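/- If T : H1 → H2 is an invertible bounded operator of the form T = U + K with U unitary and K compact, then T⁻¹ is also of the form U' + K' with U' unitary and K' compact. -/

import Mathlib

/-- If `T : H1 → H2` is an invertible bounded operator of the form `T = U + K` with `U`
unitary and `K` compact, then `T⁻¹` is also of the form unitary plus compact. -/
theorem stmt0
    {H1 H2 : Type*} [NormedAddCommGroup H1] [InnerProductSpace ℂ H1] [CompleteSpace H1]
    [NormedAddCommGroup H2] [InnerProductSpace ℂ H2] [CompleteSpace H2]
    (T : H1 →L[ℂ] H2) (S : H2 →L[ℂ] H1)
    (hST : S.comp T = ContinuousLinearMap.id ℂ H1)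
    (hTS : T.comp S = ContinuousLinearMap.id ℂ H2)
    (U : H1 ≃ₗᵢ[ℂ] H2) (K : H1 →L[ℂ] H2)
    (hK : IsCompactOperator K)
    (hT : T = (U.toContinuousLinearEquiv : H1 →L[ℂ] H2) + K) :
    ∃ (U' : H2 ≃ₗᵢ[ℂ] H1) (K' : H2 →L[ℂ] H1),
      IsCompactOperator K' ∧
      S = (U'.toContinuousLinearEquiv : H2 →L[ℂ] H1) + K' := by
  refine ⟨U.symm, -((S.comp K).comp (U.symm.toContinuousLinearEquiv : H2 →L[ℂ] H1)), ?_, ?_⟩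
  · have h := ((hK.clm_comp S).comp_clm
      (U.symm.toContinuousLinearEquiv : H2 →L[ℂ] H1)).neg
    exact h
  · ext y
    have h := DFunLike.congr_fun hST (U.symm y)
    rw [hT] at h
    simp at h
    simpa [← sub_eq_add_neg] using eq_sub_of_add_eq h
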